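/- Let m ≥ 2 and write 𝟙 = (1, …, 1) ∈ ℝ^m. For every ξ ∈ ℝ and ζ > 0 there is a neighborhood W of (ξ·𝟙, −ζ·𝟙) in ℝ^m × ℝ^m such that every maximal solution y of the system (hcu) with (y(0), y'(0)) ∈ W is defined on all of ℝ; moreover, for each such solution there exist δ > 0 and T > 0 such that y_j(t) < −δ for all t ≥ T and all j, and y_j(t) > δ for all t ≤ −T and all j. -/

import Mathlib

/-!
Along a solution of (hcu) with `n` components, `I = 𝔼 y' - (n / 2) (𝔼 y)² - 𝔼 y² / 2` is conserved,
so the mean `s = 𝔼 y` satisfies the Riccati-like equation `s' = I + (n + 1) / 2 * s² + V / 2`, where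
`V` is the mean squared deviation of the components from `s`. Near `(ξ·𝟙, -ζ·𝟙)` and for small `V`,
this forces `s` down through a strip `[-M, M]` at a definite speed `η`, after which it stays between
`-B` and `-M`. The deviations obey, to leading order, `dev' = s * dev + w` and `w' = n * s * w`;
their energy grows at most by a fixed factor during the transit time `2 * M / η` and does not grow
once `s ≤ -M`. A small enough initial energy therefore stays small, which confines the solution to a
compact set and puts every component below `-M / 2` after the transit. The symmetry `y(t) ↦ -y(-t)`
gives the same conclusion backward in time.
-/

open Set Filter Topology Fintype
open scoped BigOperators

section Scalar

variable {f f' : ℝ → ℝ} {a b : ℝ}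

theorem forall_mem_Icc_lt_of_forall_Ico_lt {R : ℝ} (hf : ContinuousOn f (Icc a b))
    (step : ∀ t ∈ Icc a b, (∀ u ∈ Ico a t, f u < R) → f t < R) : ∀ t ∈ Icc a b, f t < R := by
  by_contra! exceeded
  have compact_exceeded : IsCompact (Icc a b ∩ f ⁻¹' Ici R) :=
    isCompact_Icc.of_isClosed_subset (hf.preimage_isClosed_of_isClosed isClosed_Icc isClosed_Ici)
      inter_subset_left
  obtain ⟨t, ⟨ht, hRt⟩, t_le⟩ := compact_exceeded.exists_isLeast exceeded
  refine (step t ht fun u hu => ?_).not_ge hRt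
  by_contra! hRu
  exact hu.2.not_ge (t_le ⟨⟨hu.1, hu.2.le.trans ht.2⟩, hRu⟩)

theorem le_of_deriv_right_neg_of_eq {c : ℝ} (hf : ContinuousOn f (Icc a b))
    (hf' : ∀ t ∈ Ico a b, HasDerivWithinAt f (f' t) (Ici t) t) (ha : f a ≤ c)
    (hc : ∀ t ∈ Ico a b, f t = c → f' t < 0) : ∀ t ∈ Icc a b, f t ≤ c :=
  image_le_of_deriv_right_lt_deriv_boundary hf hf' ha (fun _ => hasDerivAt_const _ _) hc

theorem ge_of_deriv_right_pos_of_eq {c : ℝ} (hf : ContinuousOn f (Icc a b))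
    (hf' : ∀ t ∈ Ico a b, HasDerivWithinAt f (f' t) (Ici t) t) (ha : c ≤ f a)
    (hc : ∀ t ∈ Ico a b, f t = c → 0 < f' t) : ∀ t ∈ Icc a b, c ≤ f t := by
  have := le_of_deriv_right_neg_of_eq (c := -c) hf.neg (fun t ht => (hf' t ht).neg)
    (neg_le_neg ha) fun t ht h => neg_neg_of_pos (hc t ht (neg_injective h))
  exact fun t ht => neg_le_neg_iff.1 (this t ht)

theorem le_sub_mul_of_deriv_right_le_neg {η : ℝ} (hf : ContinuousOn f (Icc a b))
    (hf' : ∀ t ∈ Ico a b, HasDerivWithinAt f (f' t) (Ici t) t)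
    (hη : ∀ t ∈ Ico a b, f' t ≤ -η) : ∀ t ∈ Icc a b, f t ≤ f a - η * (t - a) := by
  have hline (t : ℝ) : HasDerivAt (fun u => f a - η * (u - a)) (-η) t := by
    simpa using (((hasDerivAt_id t).sub_const a).const_mul η).const_sub (f a)
  exact image_le_of_deriv_right_le_deriv_boundary hf hf' (by simp)
    (fun t _ => (hline t).continuousAt.continuousWithinAt)
    (fun t _ => (hline t).hasDerivWithinAt) hη

theorem le_max_sub_mul_of_deriv_right_le_neg_of_mem_Icc {c d η : ℝ} (hη : 0 < η) (hcd : c ≤ d)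
    (hf : ContinuousOn f (Icc a b))
    (hf' : ∀ t ∈ Ico a b, HasDerivWithinAt f (f' t) (Ici t) t) (ha : f a ≤ d)
    (strip : ∀ t ∈ Ico a b, f t ∈ Icc c d → f' t ≤ -η) :
    ∀ t ∈ Icc a b, f t ≤ max c (d - η * (t - a)) := by
  intro t ht
  have crosses_down {e : ℝ} (he : e ∈ Icc c d) (u : ℝ) (hu : u ∈ Ico a b) (h : f u = e) :
      f' u < 0 := (strip u hu (h ▸ he)).trans_lt (neg_neg_of_pos hη)
  have le_d := le_of_deriv_right_neg_of_eq hf hf' ha (crosses_down ⟨hcd, le_rfl⟩)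
  refine le_max_iff.2 (or_iff_not_imp_left.2 fun hct => ?_)
  have c_le : ∀ u ∈ Icc a t, c ≤ f u := fun u hu => by
    by_contra! huc
    exact hct <| le_of_deriv_right_neg_of_eq (hf.mono (Icc_subset_Icc hu.1 ht.2))
      (fun x hx => hf' x ⟨hu.1.trans hx.1, hx.2.trans_le ht.2⟩) huc.le
      (fun x hx => crosses_down ⟨le_rfl, hcd⟩ x ⟨hu.1.trans hx.1, hx.2.trans_le ht.2⟩)
      t ⟨hu.2, le_rfl⟩
  have mem_Ico {u : ℝ} (hu : u ∈ Ico a t) : u ∈ Ico a b := ⟨hu.1, hu.2.trans_le ht.2⟩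
  have slope := le_sub_mul_of_deriv_right_le_neg (hf.mono (Icc_subset_Icc_right ht.2))
    (fun u hu => hf' u (mem_Ico hu))
    (fun u hu => strip u (mem_Ico hu)
      ⟨c_le u (Ico_subset_Icc_self hu), le_d u (Ico_subset_Icc_self (mem_Ico hu))⟩)
    t ⟨ht.1, le_rfl⟩
  linarith

theorem le_mul_exp_of_deriv_right_le {K : ℝ} (hf : ContinuousOn f (Icc a b))
    (hf' : ∀ t ∈ Ico a b, HasDerivWithinAt f (f' t) (Ici t) t)
    (bound : ∀ t ∈ Ico a b, f' t ≤ K * f t) :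
    ∀ t ∈ Icc a b, f t ≤ f a * Real.exp (K * (t - a)) := by
  intro t ht
  have := le_gronwallBound_of_liminf_deriv_right_le hf
    (fun u hu _ hr => (hf' u hu).liminf_right_slope_le hr) le_rfl (ε := 0) (by simpa using bound)
    t ht
  rwa [gronwallBound_ε0] at this

theorem le_mul_exp_of_growth_of_decay {c K : ℝ} (hac : a ≤ c) (hab : a ≤ b) (hK : 0 ≤ K)
    (hf : ContinuousOn f (Icc a b))
    (hf' : ∀ t ∈ Ico a b, HasDerivWithinAt f (f' t) (Ici t) t) (ha : 0 ≤ f a)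
    (growth : ∀ t ∈ Ico a b, f' t ≤ K * f t) (decay : ∀ t ∈ Ico a b, c ≤ t → f' t ≤ 0) :
    f b ≤ f a * Real.exp (K * (c - a)) := by
  have grown := le_mul_exp_of_deriv_right_le hf hf' growth
  rcases le_total b c with hbc | hcb
  · exact (grown b ⟨hab, le_rfl⟩).trans (by gcongr)
  · have decayed := le_sub_mul_of_deriv_right_le_neg (η := 0)
      (hf.mono (Icc_subset_Icc_left hac)) (fun t ht => hf' t ⟨hac.trans ht.1, ht.2⟩)
      (fun t ht => by simpa using decay t ⟨hac.trans ht.1, ht.2⟩ ht.1) b ⟨hcb, le_rfl⟩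
    rw [zero_mul, sub_zero] at decayed
    exact decayed.trans (grown c ⟨hac, hcb⟩)

end Scalar

section IntegralCurve

variable {E : Type*} [NormedAddCommGroup E] [NormedSpace ℝ E] {f : E → E} {γ α : ℝ → E}
  {a b : EReal} {c β : ℝ}

theorem exists_tendsto_nhdsLT_of_norm_deriv_le [CompleteSpace E] {γ' : ℝ → E} {C : ℝ} (hcβ : c < β)
    (hγ : ∀ t ∈ Ioo c β, HasDerivAt γ (γ' t) t) (hC : ∀ t ∈ Ioo c β, ‖γ' t‖ ≤ C) :
    ∃ x, Tendsto γ (𝓝[<] β) (𝓝 x) := by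
  have lipschitz : LipschitzOnWith C.toNNReal γ (Ioo c β) :=
    (convex_Ioo c β).lipschitzOnWith_of_nnnorm_hasDerivWithin_le
      (fun t ht => (hγ t ht).hasDerivWithinAt)
      fun t ht => by simpa [← norm_toNNReal] using Real.toNNReal_mono (hC t ht)
  have cauchy : Cauchy (𝓝[<] β) := cauchy_nhds.mono inf_le_left
  exact cauchy_map_iff_exists_tendsto.1 <|
    cauchy.map_of_le lipschitz.uniformContinuousOn (le_principal_iff.2 (Ioo_mem_nhdsLT hcβ))

theorem hasDerivAt_ite_lt_of_tendsto (hγ : ∀ᶠ t in 𝓝[<] β, HasDerivAt γ (f (γ t)) t)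
    (lim : Tendsto γ (𝓝[<] β) (𝓝 (α β))) (hf : ContinuousAt f (α β))
    (hα : HasDerivAt α (f (α β)) β) :
    HasDerivAt (fun t => if t < β then γ t else α t) (f (α β)) β := by
  set glued : ℝ → E := fun t => if t < β then γ t else α t
  have glued_eq : glued =ᶠ[𝓝[<] β] γ :=
    eventually_mem_nhdsWithin.mono fun t ht => if_pos ht
  have glued_deriv : ∀ᶠ t in 𝓝[<] β, HasDerivAt glued (f (γ t)) t := by
    filter_upwards [hγ, self_mem_nhdsWithin] with t ht htβ
    exact ht.congr_of_eventuallyEq ((eventually_lt_nhds htβ).mono fun u hu => if_pos hu)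
  have left : HasDerivWithinAt glued (f (α β)) (Iic β) β := by
    refine hasDerivWithinAt_Iic_of_tendsto_deriv (s := {t | t < β ∧ HasDerivAt glued (f (γ t)) t})
      (fun t ht => ht.2.differentiableAt.differentiableWithinAt) ?_
      (eventually_mem_nhdsWithin.and glued_deriv) ?_
    · have : Tendsto glued (𝓝[<] β) (𝓝 (glued β)) := by
        simpa [glued] using lim.congr' glued_eq.symm
      exact this.mono_left (nhdsWithin_mono _ fun t ht => ht.1)
    · exact (hf.tendsto.comp lim).congr' (glued_deriv.mono fun t ht => ht.deriv.symm)
  have right : HasDerivWithinAt glued (f (α β)) (Ici β) β :=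
    hα.hasDerivWithinAt.congr (fun t ht => if_neg (not_lt.2 ht)) (if_neg (lt_irrefl β))
  simpa using left.union right

/-- The open real interval `(a, b)` with possibly infinite endpoints. -/
abbrev realIoo (a b : EReal) : Set ℝ := Real.toEReal ⁻¹' Ioo a b

theorem isOpen_realIoo (a b : EReal) : IsOpen (realIoo a b) :=
  isOpen_Ioo.preimage continuous_coe_real_ereal

theorem realIoo_mem_nhds {t : ℝ} (ht : t ∈ realIoo a b) : realIoo a b ∈ 𝓝 t :=
  (isOpen_realIoo a b).mem_nhds ht

theorem neg_mem_realIoo {t : ℝ} : -t ∈ realIoo a b ↔ t ∈ realIoo (-b) (-a) := by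
  simp only [mem_preimage, mem_Ioo, EReal.coe_neg, EReal.lt_neg_comm (a := a),
    EReal.neg_lt_comm (b := b), and_comm]

theorem isIntegralCurveOn_realIoo_iff :
    IsIntegralCurveOn γ (fun _ => f) (realIoo a b) ↔
      ∀ t ∈ realIoo a b, HasDerivAt γ (f (γ t)) t :=
  ⟨fun h t ht => (h t ht).hasDerivAt (realIoo_mem_nhds ht), fun h t ht => (h t ht).hasDerivWithinAt⟩

theorem isIntegralCurveOn_comp_neg (h : IsIntegralCurveOn γ (fun _ => f) (realIoo a b)) :
    IsIntegralCurveOn (fun t => γ (-t)) (fun _ => -f) (realIoo (-b) (-a)) := by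
  refine isIntegralCurveOn_realIoo_iff.2 fun t ht => ?_
  simpa [Function.comp_def] using
    (isIntegralCurveOn_realIoo_iff.1 h _ (neg_mem_realIoo.2 ht)).scomp t (hasDerivAt_neg t)

theorem exists_isIntegralCurveOn_extension [CompleteSpace E] (hf : ContDiff ℝ 1 f) {K : Set E}
    (hK : IsCompact K) (hac : a < c) (hcβ : c < β)
    (hγ : IsIntegralCurveOn γ (fun _ => f) (realIoo a β)) (mem_K : ∀ t ∈ Ioo c β, γ t ∈ K) :
    ∃ b' > β, ∃ γ' : ℝ → E, IsIntegralCurveOn γ' (fun _ => f) (realIoo a (b' : ℝ)) ∧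
      EqOn γ' γ (realIoo a β) := by
  rw [isIntegralCurveOn_realIoo_iff] at hγ
  have deriv_near : ∀ t ∈ Ioo c β, HasDerivAt γ (f (γ t)) t := fun t ht =>
    hγ t ⟨hac.trans (EReal.coe_lt_coe ht.1), EReal.coe_lt_coe ht.2⟩
  obtain ⟨C, hC⟩ := hK.exists_bound_of_continuousOn hf.continuous.continuousOn
  obtain ⟨x, lim⟩ := exists_tendsto_nhdsLT_of_norm_deriv_le hcβ deriv_near
    fun t ht => hC _ (mem_K t ht)
  obtain ⟨α, rfl, ε, hε, hα⟩ :=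
    hf.contDiffAt.exists_forall_mem_closedBall_exists_eq_forall_mem_Ioo_hasDerivAt₀ (x₀ := x) β
  refine ⟨β + ε, lt_add_of_pos_right β hε, fun t => if t < β then γ t else α t,
    isIntegralCurveOn_realIoo_iff.2 fun t ht => ?_,
    fun t ht => if_pos (EReal.coe_lt_coe_iff.1 ht.2)⟩
  rcases lt_trichotomy t β with htβ | rfl | hβt
  · simpa only [if_pos htβ] using (hγ t ⟨ht.1, EReal.coe_lt_coe htβ⟩).congr_of_eventuallyEq
      ((eventually_lt_nhds htβ).mono fun u hu => if_pos hu)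
  · simpa only [lt_irrefl, if_false] using hasDerivAt_ite_lt_of_tendsto
      (mem_of_superset (Ioo_mem_nhdsLT hcβ) deriv_near) lim hf.continuous.continuousAt
      (hα t ⟨sub_lt_self t hε, lt_add_of_pos_right t hε⟩)
  · have htε : t ∈ Ioo (β - ε) (β + ε) := ⟨by linarith, EReal.coe_lt_coe_iff.1 ht.2⟩
    simpa only [if_neg hβt.not_gt] using (hα t htε).congr_of_eventuallyEq
      ((eventually_gt_nhds hβt).mono fun u hu => if_neg (not_lt_of_gt hu))

/-- `γ` is an integral curve of the autonomous vector field `f` on `(a, b)` that does not extend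
to an integral curve on a larger open interval. -/
def IsMaximalIntegralCurve (γ : ℝ → E) (f : E → E) (a b : EReal) : Prop :=
  IsIntegralCurveOn γ (fun _ => f) (realIoo a b) ∧
    ∀ (γ' : ℝ → E) (a' b' : EReal), a' ≤ a → b ≤ b' →
      IsIntegralCurveOn γ' (fun _ => f) (realIoo a' b') → EqOn γ' γ (realIoo a b) →
        a' = a ∧ b' = b

namespace IsMaximalIntegralCurve

theorem comp_neg (h : IsMaximalIntegralCurve γ f a b) :
    IsMaximalIntegralCurve (fun t => γ (-t)) (-f) (-b) (-a) := by
  refine ⟨isIntegralCurveOn_comp_neg h.1, fun γ' a' b' ha hb hγ' eq => ?_⟩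
  have eq_neg := h.2 (fun t => γ' (-t)) (-b') (-a') (EReal.neg_le.1 hb) (EReal.le_neg.1 ha)
    (by simpa using isIntegralCurveOn_comp_neg hγ') fun t ht => by
      simpa using eq (neg_mem_realIoo.1 (by simpa using ht) : -t ∈ realIoo (-b) (-a))
  exact ⟨neg_eq_iff_eq_neg.1 eq_neg.2, neg_eq_iff_eq_neg.1 eq_neg.1⟩

theorem eq_top_of_mem_isCompact [CompleteSpace E] (h : IsMaximalIntegralCurve γ f a b)
    (hf : ContDiff ℝ 1 f) {K : Set E} (hK : IsCompact K) (hac : a < c) (hcb : c < b)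
    (mem_K : ∀ t : ℝ, c ≤ t → t < b → γ t ∈ K) : b = ⊤ := by
  induction b with
  | bot => exact absurd hcb not_lt_bot
  | top => rfl
  | coe β =>
    obtain ⟨b', hb', γ', hγ', eq⟩ := exists_isIntegralCurveOn_extension hf hK hac
      (EReal.coe_lt_coe_iff.1 hcb) h.1 fun t ht => mem_K t ht.1.le (EReal.coe_lt_coe ht.2)
    have := (h.2 γ' a b' le_rfl (EReal.coe_le_coe hb'.le) hγ' eq).2
    exact absurd (EReal.coe_injective this) hb'.ne'

theorem eq_bot_of_mem_isCompact [CompleteSpace E] (h : IsMaximalIntegralCurve γ f a b)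
    (hf : ContDiff ℝ 1 f) {K : Set E} (hK : IsCompact K) (hac : a < c) (hcb : c < b)
    (mem_K : ∀ t : ℝ, t ≤ c → a < t → γ t ∈ K) : a = ⊥ := by
  refine EReal.neg_eq_top_iff.1 <| h.comp_neg.eq_top_of_mem_isCompact (c := -c) hf.neg hK
    (EReal.neg_lt_neg_iff.2 hcb) (EReal.neg_lt_neg_iff.2 hac) fun t ht hta =>
      mem_K (-t) (neg_le.1 ht) (EReal.lt_neg_comm.1 hta)

end IsMaximalIntegralCurve

end IntegralCurve

theorem two_mul_mul_abs_mul_le_sq_add_sq (σ v w : ℝ) :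
    2 * σ * |v * w| ≤ (σ * v) ^ 2 + w ^ 2 := by
  have := two_mul_le_add_sq (σ * |v|) |w|
  rw [mul_pow, sq_abs, sq_abs, ← mul_pow] at this
  rw [abs_mul]
  linarith

section Expect

variable {ι : Type*} [Fintype ι]

theorem expect_sq_eq_sq_expect_add_expect_balance_sq [Nonempty ι] (x : ι → ℝ) :
    𝔼 j, x j ^ 2 = (𝔼 j, x j) ^ 2 + 𝔼 j, balance x j ^ 2 := by
  have expand (j : ι) :
      x j ^ 2 = (𝔼 i, x i) ^ 2 + 2 * (𝔼 i, x i) * balance x j + balance x j ^ 2 := by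
    rw [balance_apply]; ring
  simp only [expand, Finset.expect_add_distrib, ← Finset.mul_expect, expect_balance,
    expect_const, mul_zero, add_zero]

theorem hasDerivAt_expect {f f' : ι → ℝ → ℝ} {t : ℝ} (hf : ∀ j, HasDerivAt (f j) (f' j t) t) :
    HasDerivAt (fun t => 𝔼 j, f j t) (𝔼 j, f' j t) t := by
  simpa only [expect_eq_sum_div_card] using
    (HasDerivAt.fun_sum fun j _ => hf j).div_const (card ι : ℝ)

end Expect

namespace Hcu

variable {ι : Type*} [Fintype ι] {z : (ι → ℝ) × (ι → ℝ)} {γ : ℝ → (ι → ℝ) × (ι → ℝ)} {t : ℝ}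

/-- The system (hcu) as a first order vector field on pairs `z = (y, y')`. -/
def field (z : (ι → ℝ) × (ι → ℝ)) : (ι → ℝ) × (ι → ℝ) :=
  (z.2, fun j => (∑ k, z.1 k + z.1 j) * z.2 j + (z.1 j * ∑ k, z.1 k ^ 2 - z.1 j ^ 2 * ∑ k, z.1 k))

theorem contDiff_field : ContDiff ℝ 1 (field (ι := ι)) := by
  unfold field
  fun_prop

theorem hasDerivAt_field_iff :
    HasDerivAt γ (field (γ t)) t ↔ (∀ j, HasDerivAt (fun s => (γ s).1 j) ((γ t).2 j) t) ∧
      ∀ j, HasDerivAt (fun s => (γ s).2 j) ((field (γ t)).2 j) t := by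
  rw [← hasDerivAt_pi, ← hasDerivAt_pi]
  exact ⟨fun h => ⟨h.fst, h.snd⟩, fun h => h.1.prodMk h.2⟩

/-- The mean of the components. -/
noncomputable def mean (z : (ι → ℝ) × (ι → ℝ)) : ℝ := 𝔼 j, z.1 j

/-- The deviations of the components from their mean. -/
noncomputable def dev (z : (ι → ℝ) × (ι → ℝ)) : ι → ℝ := balance z.1

/-- What the deviations from the mean have as velocity besides `mean z * dev z`: along solutions
`dev' = mean * dev + devVel`. -/
noncomputable def devVel (z : (ι → ℝ) × (ι → ℝ)) (j : ι) : ℝ := balance z.2 j - mean z * dev z j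

/-- The quantity `𝔼 y' - (n / 2) (𝔼 y)² - 𝔼 y² / 2` for `n` components, constant along solutions. -/
noncomputable def firstIntegral (z : (ι → ℝ) × (ι → ℝ)) : ℝ :=
  𝔼 j, z.2 j - card ι / 2 * mean z ^ 2 - (𝔼 j, z.1 j ^ 2) / 2

/-- The derivative of `devVel` along solutions, less `card ι * mean z * devVel z` and a term
common to all components. It is at least quadratic in `dev z` and `devVel z`. -/
noncomputable def selfForce (z : (ι → ℝ) × (ι → ℝ)) (j : ι) : ℝ :=
  dev z j * devVel z j + (1 - card ι) * mean z * dev z j ^ 2 + (∑ k, dev z k ^ 2) * dev z j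

/-- The squared size of the deviation of `z` from the diagonal, with positions weighted by `σ`. -/
noncomputable def energy (σ : ℝ) (z : (ι → ℝ) × (ι → ℝ)) : ℝ :=
  ∑ j, ((σ * dev z j) ^ 2 + devVel z j ^ 2)

/-- The derivative of `energy σ` along solutions. -/
noncomputable def energyDeriv (σ : ℝ) (z : (ι → ℝ) × (ι → ℝ)) : ℝ :=
  2 * ∑ j, (σ ^ 2 * dev z j * (mean z * dev z j + devVel z j) +
    card ι * mean z * devVel z j ^ 2 + devVel z j * selfForce z j)

theorem sum_fst_eq : ∑ j, z.1 j = card ι * mean z := (card_mul_expect z.1).symm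

theorem expect_fst_sq_eq [Nonempty ι] :
    𝔼 j, z.1 j ^ 2 = mean z ^ 2 + 𝔼 j, dev z j ^ 2 :=
  expect_sq_eq_sq_expect_add_expect_balance_sq z.1

theorem sum_fst_sq_eq [Nonempty ι] :
    ∑ j, z.1 j ^ 2 = card ι * mean z ^ 2 + ∑ j, dev z j ^ 2 := by
  rw [← card_mul_expect, expect_fst_sq_eq, mul_add, card_mul_expect]

theorem fst_apply_eq (j : ι) : z.1 j = mean z + dev z j := by
  rw [dev, balance_apply, mean]; ring

theorem snd_apply_eq (j : ι) : z.2 j = 𝔼 i, z.2 i + mean z * dev z j + devVel z j := by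
  rw [devVel, balance_apply]; ring

theorem sum_devVel : ∑ j, devVel z j = 0 := by
  simp only [devVel, dev, Finset.sum_sub_distrib, ← Finset.mul_sum, sum_balance, mul_zero, sub_zero]

theorem field_snd_apply_eq [Nonempty ι] (j : ι) :
    (field z).2 j = (card ι + 1) * mean z * 𝔼 i, z.2 i + mean z * ∑ k, dev z k ^ 2 +
      (𝔼 i, z.2 i) * dev z j + mean z * (mean z * dev z j + devVel z j) +
      card ι * mean z * devVel z j + selfForce z j := by
  simp only [field, sum_fst_eq, sum_fst_sq_eq, selfForce]
  rw [fst_apply_eq j, snd_apply_eq j]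
  ring

section Derivatives

variable (h : HasDerivAt γ (field (γ t)) t)
include h

theorem hasDerivAt_mean : HasDerivAt (fun t => mean (γ t)) (𝔼 j, (γ t).2 j) t :=
  hasDerivAt_expect (f' := fun j t => (γ t).2 j) (hasDerivAt_field_iff.1 h).1

theorem hasDerivAt_dev (j : ι) :
    HasDerivAt (fun t => dev (γ t) j) (mean (γ t) * dev (γ t) j + devVel (γ t) j) t := by
  have := ((hasDerivAt_field_iff.1 h).1 j).sub (hasDerivAt_mean h)
  simp only [dev, balance_apply, devVel, add_sub_cancel]
  exact this

theorem hasDerivAt_firstIntegral : HasDerivAt (fun t => firstIntegral (γ t)) 0 t := by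
  obtain ⟨hy, hy'⟩ := hasDerivAt_field_iff.1 h
  have mean_sq := ((hasDerivAt_mean h).pow 2).const_mul (card ι / 2 : ℝ)
  have sq_mean := (hasDerivAt_expect (f' := fun j t => 2 * (γ t).1 j * (γ t).2 j)
    fun j => by simpa using (hy j).pow 2).div_const 2
  have velocity := hasDerivAt_expect (f' := fun j t => (field (γ t)).2 j) hy'
  refine ((velocity.sub mean_sq).sub sq_mean).congr_deriv ?_
  simp only [field, sum_fst_eq, Finset.expect_add_distrib, Finset.expect_sub_distrib,
    add_mul, ← Finset.mul_expect, ← Finset.expect_mul, mul_assoc]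
  rw [← card_mul_expect fun j => (γ t).1 j ^ 2]
  simp only [mean]
  ring

theorem exists_hasDerivAt_devVel [Nonempty ι] : ∃ c, ∀ j,
    HasDerivAt (fun t => devVel (γ t) j) (card ι * mean (γ t) * devVel (γ t) j +
      selfForce (γ t) j + c) t := by
  refine ⟨(card ι + 1) * mean (γ t) * 𝔼 i, (γ t).2 i + mean (γ t) * ∑ k, dev (γ t) k ^ 2 -
    𝔼 i, (field (γ t)).2 i, fun j => ?_⟩
  have hy' := (hasDerivAt_field_iff.1 h).2
  have := ((hy' j).sub (hasDerivAt_expect (f' := fun j t => (field (γ t)).2 j) hy')).sub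
    ((hasDerivAt_mean h).mul (hasDerivAt_dev h j))
  simp only [devVel, balance_apply] at this ⊢
  refine this.congr_deriv ?_
  rw [field_snd_apply_eq j, devVel, balance_apply]
  ring

theorem hasDerivAt_energy [Nonempty ι] (σ : ℝ) : HasDerivAt (fun t => energy σ (γ t))
    (energyDeriv σ (γ t)) t := by
  obtain ⟨c, devVel_deriv⟩ := exists_hasDerivAt_devVel h
  have drift_free : ∑ j, devVel (γ t) j * c = 0 := by
    rw [← Finset.sum_mul, sum_devVel, zero_mul]
  refine (HasDerivAt.fun_sum fun j _ => (((hasDerivAt_dev h j).const_mul σ).pow 2).add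
    ((devVel_deriv j).pow 2)).congr_deriv ?_
  rw [energyDeriv, ← add_zero (∑ j, (σ ^ 2 * _ * _ + _ + _)), ← drift_free,
    ← Finset.sum_add_distrib, Finset.mul_sum]
  exact Finset.sum_congr rfl fun j _ => by push_cast; ring

end Derivatives

theorem sq_add_sq_le_energy (σ : ℝ) (z : (ι → ℝ) × (ι → ℝ)) (j : ι) :
    (σ * dev z j) ^ 2 + devVel z j ^ 2 ≤ energy σ z :=
  Finset.single_le_sum (f := fun j => (σ * dev z j) ^ 2 + devVel z j ^ 2)
    (fun _ _ => by positivity) (Finset.mem_univ j)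

theorem energy_nonneg (σ : ℝ) (z : (ι → ℝ) × (ι → ℝ)) : 0 ≤ energy σ z :=
  Finset.sum_nonneg fun _ _ => by positivity

theorem continuous_mean : Continuous (mean (ι := ι)) := by
  unfold mean
  simp only [expect_eq_sum_div_card]
  fun_prop

theorem continuous_firstIntegral : Continuous (firstIntegral (ι := ι)) := by
  unfold firstIntegral mean
  simp only [expect_eq_sum_div_card]
  fun_prop

theorem continuous_energy (σ : ℝ) : Continuous (energy (ι := ι) σ) := by
  unfold energy devVel dev mean
  simp only [balance_apply, expect_eq_sum_div_card]
  fun_prop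

section Estimates

variable {σ B ρ r : ℝ}

theorem sum_dev_sq_le (hσ : 0 < σ) (hE : energy σ z ≤ (σ * ρ) ^ 2) :
    ∑ j, dev z j ^ 2 ≤ ρ ^ 2 := by
  have weighted : σ ^ 2 * ∑ j, dev z j ^ 2 ≤ energy σ z := by
    rw [Finset.mul_sum, energy]
    exact Finset.sum_le_sum fun j _ => by nlinarith [sq_nonneg (devVel z j)]
  exact le_of_mul_le_mul_left (by linarith [mul_pow σ ρ 2]) (pow_pos hσ 2)

theorem abs_dev_le (hσ : 0 < σ) (hρ : 0 ≤ ρ) (hE : energy σ z ≤ (σ * ρ) ^ 2) (j : ι) :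
    |dev z j| ≤ ρ :=
  abs_le_of_sq_le_sq ((Finset.single_le_sum (fun _ _ => sq_nonneg _) (Finset.mem_univ j)).trans
    (sum_dev_sq_le hσ hE)) hρ

theorem abs_devVel_le (hr : 0 ≤ r) (hE : energy σ z ≤ r ^ 2) (j : ι) : |devVel z j| ≤ r :=
  abs_le_of_sq_le_sq (by nlinarith [sq_add_sq_le_energy σ z j, sq_nonneg (σ * dev z j)]) hr

theorem devVel_mul_selfForce_le [Nonempty ι] (hB : |mean z| ≤ B) (hdev : ∀ j, |dev z j| ≤ ρ)
    (hsum : ∑ k, dev z k ^ 2 ≤ ρ) (j : ι) :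
    devVel z j * selfForce z j ≤
      ρ * devVel z j ^ 2 + ρ * (card ι * B + 1) * |dev z j * devVel z j| := by
  set v := dev z j
  set w := devVel z j
  set V := ∑ k, dev z k ^ 2
  have coefficient_le : |(1 - card ι) * mean z * v + V| ≤ ρ * (card ι * B + 1) := by
    have one_le_card : (1 : ℝ) ≤ card ι := mod_cast Fintype.card_pos
    have hcard : |(1 - card ι : ℝ)| ≤ card ι := abs_le.2 ⟨by linarith, by linarith⟩
    have hB₀ : 0 ≤ B := (abs_nonneg _).trans hB
    have hV₀ : 0 ≤ V := by positivity
    calc |(1 - card ι) * mean z * v + V|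
        ≤ |(1 - card ι : ℝ)| * |mean z| * |v| + V := by
          rw [← abs_mul, ← abs_mul]
          exact (abs_add_le _ _).trans_eq (by rw [abs_of_nonneg hV₀])
      _ ≤ card ι * B * ρ + ρ := by gcongr; exact hdev j
      _ = ρ * (card ι * B + 1) := by ring
  calc w * selfForce z j
      = v * w ^ 2 + ((1 - card ι) * mean z * v + V) * (v * w) := by rw [selfForce]; ring
    _ ≤ |v| * w ^ 2 + |(1 - card ι) * mean z * v + V| * |v * w| := by
        rw [← abs_mul _ (v * w)]
        gcongr <;> exact le_abs_self _
    _ ≤ ρ * w ^ 2 + ρ * (card ι * B + 1) * |v * w| := by gcongr; exact hdev j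

theorem two_mul_devVel_mul_selfForce_le [Nonempty ι] (hσ : 0 < σ) (hB : |mean z| ≤ B)
    (gap : ρ * (card ι * B + 1 + 2 * σ) ≤ σ ^ 2) (hdev : ∀ j, |dev z j| ≤ ρ)
    (hsum : ∑ k, dev z k ^ 2 ≤ ρ) (j : ι) :
    2 * (devVel z j * selfForce z j) ≤ σ * ((σ * dev z j) ^ 2 + devVel z j ^ 2) := by
  have force_le := devVel_mul_selfForce_le hB hdev hsum j
  set v := dev z j
  set w := devVel z j
  have hρ : 0 ≤ ρ := (abs_nonneg v).trans (hdev j)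
  have hB₀ : 0 ≤ B := (abs_nonneg _).trans hB
  refine le_of_mul_le_mul_left ?_ hσ
  calc σ * (2 * (w * selfForce z j))
      ≤ 2 * σ * ρ * w ^ 2 + ρ * (card ι * B + 1) * (2 * σ * |v * w|) := by nlinarith
    _ ≤ 2 * σ * ρ * ((σ * v) ^ 2 + w ^ 2) + ρ * (card ι * B + 1) * ((σ * v) ^ 2 + w ^ 2) := by
        gcongr
        · exact le_add_of_nonneg_left (sq_nonneg _)
        · exact two_mul_mul_abs_mul_le_sq_add_sq σ v w
    _ = ρ * (card ι * B + 1 + 2 * σ) * ((σ * v) ^ 2 + w ^ 2) := by ring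
    _ ≤ σ ^ 2 * ((σ * v) ^ 2 + w ^ 2) := by gcongr
    _ = σ * (σ * ((σ * v) ^ 2 + w ^ 2)) := by ring

theorem energyDeriv_le_mul_energy_of_forall_le [Nonempty ι] {κ : ℝ} (hσ : 0 < σ)
    (hB : |mean z| ≤ B) (gap : ρ * (card ι * B + 1 + 2 * σ) ≤ σ ^ 2) (hρ : ρ ∈ Icc 0 1)
    (hE : energy σ z ≤ (σ * ρ) ^ 2)
    (drift : ∀ v w, mean z * (σ * v) ^ 2 + card ι * mean z * w ^ 2 ≤ κ * ((σ * v) ^ 2 + w ^ 2)) :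
    energyDeriv σ z ≤ 2 * (κ + σ) * energy σ z := by
  rw [energyDeriv, energy, Finset.mul_sum, Finset.mul_sum]
  refine Finset.sum_le_sum fun j _ => ?_
  have sum_le : ∑ k, dev z k ^ 2 ≤ ρ :=
    (sum_dev_sq_le hσ hE).trans (pow_le_of_le_one hρ.1 hρ.2 two_ne_zero)
  have force_le := two_mul_devVel_mul_selfForce_le hσ hB gap (abs_dev_le hσ hρ.1 hE) sum_le j
  have cross_le := two_mul_mul_abs_mul_le_sq_add_sq σ (dev z j) (devVel z j)
  nlinarith [drift (dev z j) (devVel z j), le_abs_self (dev z j * devVel z j)]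

theorem energyDeriv_le_mul_energy [Nonempty ι] (hσ : 0 < σ) (hB : |mean z| ≤ B)
    (gap : ρ * (card ι * B + 1 + 2 * σ) ≤ σ ^ 2) (hρ : ρ ∈ Icc 0 1)
    (hE : energy σ z ≤ (σ * ρ) ^ 2) :
    energyDeriv σ z ≤ 2 * (card ι * B + σ) * energy σ z := by
  refine energyDeriv_le_mul_energy_of_forall_le hσ hB gap hρ hE fun v w => ?_
  have one_le_card : (1 : ℝ) ≤ card ι := mod_cast Fintype.card_pos
  have mean_le : mean z ≤ B := (le_abs_self _).trans hB
  have hB₀ : 0 ≤ B := (abs_nonneg _).trans hB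
  rw [mul_add]
  gcongr
  nlinarith

theorem energyDeriv_nonpos [Nonempty ι] (hσ : 0 < σ) (hB : |mean z| ≤ B)
    (gap : ρ * (card ι * B + 1 + 2 * σ) ≤ σ ^ 2) (hρ : ρ ∈ Icc 0 1)
    (hE : energy σ z ≤ (σ * ρ) ^ 2) (hmean : mean z ≤ -σ) : energyDeriv σ z ≤ 0 := by
  have : energyDeriv σ z ≤ 2 * (-σ + σ) * energy σ z := by
    refine energyDeriv_le_mul_energy_of_forall_le hσ hB gap hρ hE fun v w => ?_
    have one_le_card : (1 : ℝ) ≤ card ι := mod_cast Fintype.card_pos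
    rw [mul_add]
    gcongr
    nlinarith
  simpa using this

theorem expect_snd_eq [Nonempty ι] : 𝔼 j, z.2 j =
    firstIntegral z + (card ι + 1) / 2 * mean z ^ 2 + (𝔼 j, dev z j ^ 2) / 2 := by
  rw [firstIntegral, expect_fst_sq_eq]
  ring

theorem expect_dev_sq_mem_Icc [Nonempty ι] (hdev : ∀ j, |dev z j| ≤ ρ) :
    𝔼 j, dev z j ^ 2 ∈ Icc 0 (ρ ^ 2) :=
  ⟨Finset.expect_nonneg fun _ _ => sq_nonneg _,
    Finset.expect_le Finset.univ_nonempty fun j _ => sq_le_sq.2 ((hdev j).trans (le_abs_self ρ))⟩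

end Estimates

section Trapping

variable {M B ρ η τ : ℝ}

/-- Initial data from which the mean decreases at rate `η` from `M` to `-M`, never falls below
`-B`, and the energy stays below `(M * ρ) ^ 2`. The exponential is the largest factor by which the
energy can grow during the transit time `2 * M / η`. -/
def entranceSet (M B ρ η : ℝ) : Set ((ι → ℝ) × (ι → ℝ)) :=
  {z | |mean z| < M ∧ firstIntegral z + (card ι + 1) / 2 * M ^ 2 + ρ ^ 2 / 2 < -η ∧
    -(B ^ 2 / 2) < firstIntegral z ∧
    energy M z * Real.exp (2 * (card ι * B + M) * (2 * M / η)) < (M * ρ) ^ 2}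

theorem isOpen_entranceSet : IsOpen (entranceSet (ι := ι) M B ρ η) :=
  (isOpen_lt continuous_mean.abs continuous_const).inter <|
    (isOpen_lt ((continuous_firstIntegral.add_const _).add_const _) continuous_const).inter <|
    (isOpen_lt continuous_const continuous_firstIntegral).inter <|
    isOpen_lt ((continuous_energy M).mul_const _) continuous_const

section Estimates

variable [Nonempty ι]

theorem expect_snd_le_neg (hM : 0 < M) (hρ : 0 ≤ ρ)
    (hI : firstIntegral z + (card ι + 1) / 2 * M ^ 2 + ρ ^ 2 / 2 < -η) (hmean : |mean z| ≤ M)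
    (hE : energy M z ≤ (M * ρ) ^ 2) : 𝔼 j, z.2 j ≤ -η := by
  have hdev := (expect_dev_sq_mem_Icc (abs_dev_le hM hρ hE)).2
  have hmean_sq : mean z ^ 2 ≤ M ^ 2 := sq_le_sq.2 (hmean.trans (le_abs_self M))
  rw [expect_snd_eq]
  nlinarith [Nat.cast_nonneg (α := ℝ) (card ι)]

theorem expect_snd_pos (hI : -(B ^ 2 / 2) < firstIntegral z) (hmean : mean z = -B) :
    0 < 𝔼 j, z.2 j := by
  have hdev : 0 ≤ 𝔼 j, dev z j ^ 2 := Finset.expect_nonneg fun _ _ => sq_nonneg _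
  rw [expect_snd_eq, hmean, neg_sq]
  nlinarith [Nat.cast_nonneg (α := ℝ) (card ι), sq_nonneg B]

theorem abs_expect_snd_le (hmean : |mean z| ≤ B) (hdev : ∀ j, |dev z j| ≤ ρ) :
    |𝔼 j, z.2 j| ≤ |firstIntegral z| + (card ι + 1) / 2 * B ^ 2 + ρ ^ 2 / 2 := by
  obtain ⟨dev_nonneg, dev_le⟩ := expect_dev_sq_mem_Icc hdev
  have mean_le : mean z ^ 2 ≤ B ^ 2 := sq_le_sq.2 (hmean.trans (le_abs_self B))
  rw [expect_snd_eq]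
  refine (abs_add_le _ _).trans (add_le_add ((abs_add_le _ _).trans ?_) ?_)
  · rw [abs_of_nonneg (by positivity : 0 ≤ (card ι + 1) / 2 * mean z ^ 2)]
    gcongr
  · rw [abs_of_nonneg (div_nonneg dev_nonneg zero_le_two)]
    gcongr

theorem norm_le_of_abs_le {Q r : ℝ} (hmean : |mean z| ≤ B) (hQ : |𝔼 j, z.2 j| ≤ Q)
    (hdev : ∀ j, |dev z j| ≤ ρ) (hvel : ∀ j, |devVel z j| ≤ r) :
    ‖z‖ ≤ max (B + ρ) (Q + B * ρ + r) := by
  rw [Prod.norm_def]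
  refine max_le_max ((pi_norm_le_iff_of_nonempty _).2 fun j => ?_)
    ((pi_norm_le_iff_of_nonempty _).2 fun j => ?_)
  · rw [Real.norm_eq_abs, fst_apply_eq j]
    exact (abs_add_le _ _).trans (add_le_add hmean (hdev j))
  · rw [Real.norm_eq_abs, snd_apply_eq j]
    have hprod : |mean z * dev z j| ≤ B * ρ := by
      rw [abs_mul]
      exact mul_le_mul hmean (hdev j) (abs_nonneg _) ((abs_nonneg _).trans hmean)
    exact (abs_add_le _ _).trans <|
      add_le_add ((abs_add_le _ _).trans (add_le_add hQ hprod)) (hvel j)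

end Estimates

theorem firstIntegral_eq_of_mem_Icc (hγ : ∀ t ∈ Icc 0 τ, HasDerivAt γ (field (γ t)) t) :
    ∀ t ∈ Icc 0 τ, firstIntegral (γ t) = firstIntegral (γ 0) :=
  constant_of_has_deriv_right_zero
    (fun t ht => (hasDerivAt_firstIntegral (hγ t ht)).continuousAt.continuousWithinAt)
    fun t ht => (hasDerivAt_firstIntegral (hγ t (Ico_subset_Icc_self ht))).hasDerivWithinAt

variable [Nonempty ι] (hM : 0 < M) (hMB : M ≤ B) (hρ : ρ ∈ Ioc 0 1) (hη : 0 < η)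
  (gap : ρ * (card ι * B + 1 + 2 * M) ≤ M ^ 2)
  (hγ : ∀ t ∈ Icc 0 τ, HasDerivAt γ (field (γ t)) t) (h₀ : γ 0 ∈ entranceSet M B ρ η)

include hM hMB hρ hη hγ h₀ in
theorem mean_bounds_of_energy_lt (hE : ∀ t ∈ Ico 0 τ, energy M (γ t) < (M * ρ) ^ 2) :
    ∀ t ∈ Icc 0 τ, |mean (γ t)| ≤ B ∧ mean (γ t) ≤ max (-M) (M - η * t) := by
  obtain ⟨hmean₀, hI_upper, hI_lower, -⟩ := h₀
  have cont : ContinuousOn (fun t => mean (γ t)) (Icc 0 τ) := fun t ht =>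
    (hasDerivAt_mean (hγ t ht)).continuousAt.continuousWithinAt
  have deriv (t : ℝ) (ht : t ∈ Ico 0 τ) :=
    (hasDerivAt_mean (hγ t (Ico_subset_Icc_self ht))).hasDerivWithinAt (s := Ici t)
  have hI (t : ℝ) (ht : t ∈ Ico 0 τ) :=
    firstIntegral_eq_of_mem_Icc hγ t (Ico_subset_Icc_self ht)
  have upper := le_max_sub_mul_of_deriv_right_le_neg_of_mem_Icc (c := -M) hη (by linarith) cont
    deriv (abs_lt.1 hmean₀).2.le fun t ht hmean => expect_snd_le_neg hM hρ.1.le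
      ((hI t ht).symm ▸ hI_upper) (abs_le.2 hmean) (hE t ht).le
  have lower := ge_of_deriv_right_pos_of_eq (c := -B) cont deriv
    ((neg_le_neg hMB).trans (abs_lt.1 hmean₀).1.le) fun t ht hmean =>
      expect_snd_pos ((hI t ht).symm ▸ hI_lower) hmean
  simp only [sub_zero] at upper
  refine fun t ht => ⟨abs_le.2 ⟨lower t ht, (upper t ht).trans (max_le ?_ ?_)⟩, upper t ht⟩
  · linarith
  · nlinarith [ht.1]

include hM hMB hρ hη gap hγ h₀ in
theorem energy_lt_of_forall_Ico_lt (hτ : 0 ≤ τ)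
    (hE : ∀ t ∈ Ico 0 τ, energy M (γ t) < (M * ρ) ^ 2) : energy M (γ τ) < (M * ρ) ^ 2 := by
  have bounds := mean_bounds_of_energy_lt hM hMB hρ hη hγ h₀ hE
  have abs_mean_le : ∀ t ∈ Ico 0 τ, |mean (γ t)| ≤ B := fun t ht =>
    (bounds t (Ico_subset_Icc_self ht)).1
  have past_transit : ∀ t ∈ Ico 0 τ, 2 * M / η ≤ t → mean (γ t) ≤ -M := fun t ht htT => by
    refine (bounds t (Ico_subset_Icc_self ht)).2.trans (max_le le_rfl ?_)
    linarith [(div_le_iff₀' hη).1 htT]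
  have hρ' : ρ ∈ Icc 0 1 := Ioc_subset_Icc_self hρ
  have grown := le_mul_exp_of_growth_of_decay (f := fun t => energy M (γ t)) (c := 2 * M / η)
    (K := 2 * (card ι * B + M)) (by positivity) hτ (by have := hM.trans_le hMB; positivity)
    (fun t ht => (hasDerivAt_energy (hγ t ht) M).continuousAt.continuousWithinAt)
    (fun t ht => (hasDerivAt_energy (hγ t (Ico_subset_Icc_self ht)) M).hasDerivWithinAt)
    (energy_nonneg M _)
    (fun t ht => energyDeriv_le_mul_energy hM (abs_mean_le t ht) gap hρ' (hE t ht).le)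
    (fun t ht htT => energyDeriv_nonpos hM (abs_mean_le t ht) gap hρ' (hE t ht).le
      (past_transit t ht htT))
  rw [sub_zero] at grown
  exact grown.trans_lt h₀.2.2.2

include hM hMB hρ hη gap hγ h₀ in
theorem energy_lt_of_mem_Icc : ∀ t ∈ Icc 0 τ, energy M (γ t) < (M * ρ) ^ 2 :=
  forall_mem_Icc_lt_of_forall_Ico_lt
    (fun t ht => (hasDerivAt_energy (hγ t ht) M).continuousAt.continuousWithinAt)
    fun _ ht below => energy_lt_of_forall_Ico_lt hM hMB hρ hη gap
      (fun u hu => hγ u ⟨hu.1, hu.2.trans ht.2⟩) h₀ ht.1 below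

include hM hMB hρ hη gap hγ h₀ in
theorem mean_bounds : ∀ t ∈ Icc 0 τ, |mean (γ t)| ≤ B ∧ mean (γ t) ≤ max (-M) (M - η * t) :=
  mean_bounds_of_energy_lt hM hMB hρ hη hγ h₀ fun t ht =>
    energy_lt_of_mem_Icc hM hMB hρ hη gap hγ h₀ t (Ico_subset_Icc_self ht)

include hM hMB hρ hη gap hγ h₀ in
theorem norm_le_of_mem_Icc : ∀ t ∈ Icc 0 τ, ‖γ t‖ ≤
    max (B + ρ) (|firstIntegral (γ 0)| + (card ι + 1) / 2 * B ^ 2 + ρ ^ 2 / 2 + B * ρ + M * ρ) := by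
  intro t ht
  have hE := (energy_lt_of_mem_Icc hM hMB hρ hη gap hγ h₀ t ht).le
  have hmean := (mean_bounds hM hMB hρ hη gap hγ h₀ t ht).1
  have hdev := abs_dev_le hM hρ.1.le hE
  refine norm_le_of_abs_le hmean ?_ hdev (abs_devVel_le (mul_nonneg hM.le hρ.1.le) hE)
  rw [← firstIntegral_eq_of_mem_Icc hγ t ht]
  exact abs_expect_snd_le hmean hdev

include hM hMB hρ hη gap hγ h₀ in
theorem fst_lt_of_le (t : ℝ) (ht : t ∈ Icc 0 τ) (htT : 2 * M / η ≤ t) (j : ι) :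
    (γ t).1 j < -(M / 2) := by
  have hE := (energy_lt_of_mem_Icc hM hMB hρ hη gap hγ h₀ t ht).le
  have hmean : mean (γ t) ≤ -M := (mean_bounds hM hMB hρ hη gap hγ h₀ t ht).2.trans
    (max_le le_rfl (by linarith [(div_le_iff₀' hη).1 htT]))
  have hdev := (le_abs_self _).trans (abs_dev_le hM hρ.1.le hE j)
  have hρM : ρ < M / 2 := by
    have : 0 ≤ card ι * B := mul_nonneg (Nat.cast_nonneg _) (hM.le.trans hMB)
    nlinarith [hρ.1]
  rw [fst_apply_eq j]
  linarith

end Trapping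

section Diagonal

variable [Nonempty ι] (ξ ζ : ℝ)

theorem mean_diagonal : mean ((fun _ => ξ, fun _ => ζ) : (ι → ℝ) × (ι → ℝ)) = ξ :=
  expect_const ξ

theorem firstIntegral_diagonal : firstIntegral ((fun _ => ξ, fun _ => ζ) : (ι → ℝ) × (ι → ℝ)) =
    ζ - (card ι + 1) / 2 * ξ ^ 2 := by
  simp only [firstIntegral, mean_diagonal, expect_const]
  ring

theorem energy_diagonal (σ : ℝ) :
    energy σ ((fun _ => ξ, fun _ => ζ) : (ι → ℝ) × (ι → ℝ)) = 0 := by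
  simp [energy, devVel, dev, balance_apply]

theorem exists_diagonal_mem_entranceSet {ζ : ℝ} (hζ : 0 < ζ) :
    ∃ M B ρ η : ℝ, 0 < M ∧ M ≤ B ∧ ρ ∈ Ioc 0 1 ∧ 0 < η ∧ ρ * (card ι * B + 1 + 2 * M) ≤ M ^ 2 ∧
      ((fun _ => ξ, fun _ => -ζ) : (ι → ℝ) × (ι → ℝ)) ∈ entranceSet M B ρ η := by
  set n : ℝ := (card ι : ℝ)
  have hn : 0 < n + 1 := by positivity
  -- For this `M`, `firstIntegral z + (n + 1) / 2 * M ^ 2 = -ζ / 2` at the diagonal point `z`.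
  set M := √(ξ ^ 2 + ζ / (n + 1))
  have hM : 0 < M := Real.sqrt_pos.2 (by positivity)
  have hM_sq : (n + 1) * M ^ 2 = (n + 1) * ξ ^ 2 + ζ := by
    rw [Real.sq_sqrt (by positivity)]
    field_simp
  have hξM : |ξ| < M := abs_lt_of_sq_lt_sq (by nlinarith) hM.le
  set B := M + 1 + 2 * ζ + (n + 1) * ξ ^ 2
  have hξn : 0 ≤ (n + 1) * ξ ^ 2 := by positivity
  have hB : 2 * ζ + (n + 1) * ξ ^ 2 < B ^ 2 := by nlinarith
  have hMB : M ≤ B := by linarith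
  have hgap : 0 < n * B + 1 + 2 * M := by
    have := hM.trans_le hMB
    positivity
  obtain ⟨ρ, hρ, hρ_le⟩ : ∃ ρ > 0, ρ ≤ min (min 1 (ζ / 2)) (M ^ 2 / (n * B + 1 + 2 * M)) :=
    ⟨_, by positivity, le_rfl⟩
  obtain ⟨⟨hρ₁, hρζ⟩, hρM⟩ := by simpa only [le_min_iff] using hρ_le
  refine ⟨M, B, ρ, ζ / 8, hM, hMB, ⟨hρ, hρ₁⟩, by positivity, (le_div_iff₀ hgap).1 hρM, ?_⟩
  simp only [entranceSet, mem_ofPred_eq, mean_diagonal, firstIntegral_diagonal, energy_diagonal]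
  exact ⟨hξM, by nlinarith, by linarith, by rw [zero_mul]; positivity⟩

end Diagonal

section Reflection

/-- The symmetry `y(t) ↦ -y(-t)` of the system (hcu), acting on pairs `(y, y')`. -/
def reflect (z : (ι → ℝ) × (ι → ℝ)) : (ι → ℝ) × (ι → ℝ) := (-z.1, z.2)

omit [Fintype ι] in
theorem continuous_reflect : Continuous (reflect (ι := ι)) := by
  unfold reflect
  fun_prop

theorem reflect_neg_field (z : (ι → ℝ) × (ι → ℝ)) : reflect (-field z) = field (reflect z) := by
  ext j
  · simp only [field, reflect, Prod.fst_neg, neg_neg]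
  · simp only [field, reflect, Prod.snd_neg, Pi.neg_apply, Finset.sum_neg_distrib, neg_sq]
    ring

theorem isIntegralCurveOn_reflect_comp_neg {a b : EReal}
    (hγ : IsIntegralCurveOn γ (fun _ => field) (realIoo a b)) :
    IsIntegralCurveOn (fun t => reflect (γ (-t))) (fun _ => field) (realIoo (-b) (-a)) := by
  have reversed := isIntegralCurveOn_realIoo_iff.1 (isIntegralCurveOn_comp_neg hγ)
  refine isIntegralCurveOn_realIoo_iff.2 fun t ht => ?_
  rw [← reflect_neg_field]
  exact HasDerivAt.prodMk (HasDerivAt.neg (reversed t ht).fst) (reversed t ht).snd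

end Reflection

section Neighborhoods

variable [Nonempty ι] (ξ : ℝ) {ζ : ℝ}

theorem exists_nhds_forward (hζ : 0 < ζ) :
    ∃ W ∈ 𝓝 ((fun _ => ξ, fun _ => -ζ) : (ι → ℝ) × (ι → ℝ)), ∀ (γ : ℝ → (ι → ℝ) × (ι → ℝ))
      (a b : EReal), a < (0 : ℝ) → IsIntegralCurveOn γ (fun _ => field) (realIoo a b) →
      γ 0 ∈ W → ∃ K, IsCompact K ∧ ∃ δ > 0, ∃ T > 0, ∀ t : ℝ, 0 ≤ t → t < b →
        γ t ∈ K ∧ (T ≤ t → ∀ j, (γ t).1 j < -δ) := by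
  obtain ⟨M, B, ρ, η, hM, hMB, hρ, hη, gap, mem⟩ := exists_diagonal_mem_entranceSet (ι := ι) ξ hζ
  refine ⟨entranceSet M B ρ η, isOpen_entranceSet.mem_nhds mem, fun γ a b ha hγ h₀ =>
    ⟨Metric.closedBall 0 (max (B + ρ) (|firstIntegral (γ 0)| + (card ι + 1) / 2 * B ^ 2 +
      ρ ^ 2 / 2 + B * ρ + M * ρ)), isCompact_closedBall _ _, M / 2, by positivity, 2 * M / η,
      by positivity, fun t ht htb => ?_⟩⟩
  have hγt : ∀ u ∈ Icc 0 t, HasDerivAt γ (field (γ u)) u := fun u hu =>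
    isIntegralCurveOn_realIoo_iff.1 hγ u ⟨ha.trans_le (EReal.coe_le_coe hu.1),
      (EReal.coe_le_coe hu.2).trans_lt htb⟩
  exact ⟨mem_closedBall_zero_iff.2
      (norm_le_of_mem_Icc hM hMB hρ hη gap hγt h₀ t ⟨ht, le_rfl⟩),
    fst_lt_of_le hM hMB hρ hη gap hγt h₀ t ⟨ht, le_rfl⟩⟩

theorem exists_nhds_backward (hζ : 0 < ζ) :
    ∃ W ∈ 𝓝 ((fun _ => ξ, fun _ => -ζ) : (ι → ℝ) × (ι → ℝ)), ∀ (γ : ℝ → (ι → ℝ) × (ι → ℝ))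
      (a b : EReal), (0 : ℝ) < b → IsIntegralCurveOn γ (fun _ => field) (realIoo a b) →
      γ 0 ∈ W → ∃ K, IsCompact K ∧ ∃ δ > 0, ∃ T > 0, ∀ t : ℝ, t ≤ 0 → a < t →
        γ t ∈ K ∧ (t ≤ -T → ∀ j, δ < (γ t).1 j) := by
  obtain ⟨W, hW, forward⟩ := exists_nhds_forward (ι := ι) (-ξ) hζ
  refine ⟨reflect ⁻¹' W, continuous_reflect.continuousAt.preimage_mem_nhds hW,
    fun γ a b hb hγ h₀ => ?_⟩
  obtain ⟨K, hK, δ, hδ, T, hT, bounds⟩ := forward (fun t => reflect (γ (-t))) (-b) (-a)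
    (EReal.neg_lt_comm.1 (by simpa using hb)) (isIntegralCurveOn_reflect_comp_neg hγ)
    (by simpa using h₀)
  refine ⟨reflect '' K, hK.image continuous_reflect, δ, hδ, T, hT, fun t ht hat => ?_⟩
  obtain ⟨mem_K, lt⟩ := bounds (-t) (neg_nonneg.2 ht) (EReal.neg_lt_neg_iff.2 hat)
  rw [neg_neg] at mem_K lt
  exact ⟨⟨_, mem_K, by simp [reflect]⟩, fun htT j => neg_lt_neg_iff.1 (lt (le_neg.1 htT) j)⟩

end Neighborhoods

theorem isIntegralCurveOn_field_iff {a b : EReal} :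
    IsIntegralCurveOn γ (fun _ => field) (realIoo a b) ↔ ∃ y'' : ℝ → ι → ℝ,
      (∀ j, ∀ t : ℝ, a < t → t < b → HasDerivAt (fun s => (γ s).1 j) ((γ t).2 j) t) ∧
      (∀ j, ∀ t : ℝ, a < t → t < b → HasDerivAt (fun s => (γ s).2 j) (y'' t j) t) ∧
      ∀ j, ∀ t : ℝ, a < t → t < b → y'' t j - (∑ k, (γ t).1 k + (γ t).1 j) * (γ t).2 j =
        (γ t).1 j * ∑ k, (γ t).1 k ^ 2 - (γ t).1 j ^ 2 * ∑ k, (γ t).1 k := by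
  simp only [isIntegralCurveOn_realIoo_iff, hasDerivAt_field_iff]
  constructor
  · exact fun h => ⟨fun t => (field (γ t)).2, fun j t hat htb => (h t ⟨hat, htb⟩).1 j,
      fun j t hat htb => (h t ⟨hat, htb⟩).2 j, fun j t _ _ => add_sub_cancel_left _ _⟩
  · rintro ⟨y'', hy, hy', hcu⟩ t ⟨hat, htb⟩
    refine ⟨fun j => hy j t hat htb, fun j => ?_⟩
    have : (field (γ t)).2 j = y'' t j := (sub_eq_iff_eq_add'.1 (hcu j t hat htb)).symm
    exact this ▸ hy' j t hat htb

end Hcu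

/-- For `m ≥ 2`, `ξ ∈ ℝ` and `ζ > 0`, there is a neighborhood `W`
of `(ξ·𝟙, −ζ·𝟙)` such that every maximal solution of the system (hcu) with
`(y(0), y'(0)) ∈ W` is defined on all of `ℝ`, and its components eventually lie
below `−δ` for `t ≥ T` and above `δ` for `t ≤ −T`, for some `δ, T > 0`. -/
theorem stmt_16 (m : ℕ) (hm : 2 ≤ m) (ξ ζ : ℝ) (hζ : 0 < ζ) :
    ∃ W : Set ((Fin m → ℝ) × (Fin m → ℝ)),
      W ∈ nhds (((fun _ => ξ), (fun _ => -ζ)) : (Fin m → ℝ) × (Fin m → ℝ)) ∧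
      ∀ (a b : EReal) (y y' y'' : ℝ → Fin m → ℝ),
        a < (0 : ℝ) → ((0 : ℝ) : EReal) < b →
        (∀ j, ∀ t : ℝ, a < (t : EReal) → (t : EReal) < b →
          HasDerivAt (fun s => y s j) (y' t j) t) →
        (∀ j, ∀ t : ℝ, a < (t : EReal) → (t : EReal) < b →
          HasDerivAt (fun s => y' s j) (y'' t j) t) →
        (∀ j, ∀ t : ℝ, a < (t : EReal) → (t : EReal) < b →
          y'' t j - ((∑ k, y t k) + y t j) * y' t j
            = y t j * (∑ k, (y t k) ^ 2) - (y t j) ^ 2 * (∑ k, y t k)) →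
        (∀ (a' b' : EReal) (z z' z'' : ℝ → Fin m → ℝ),
          a' ≤ a → b ≤ b' →
          (∀ j, ∀ t : ℝ, a' < (t : EReal) → (t : EReal) < b' →
            HasDerivAt (fun s => z s j) (z' t j) t) →
          (∀ j, ∀ t : ℝ, a' < (t : EReal) → (t : EReal) < b' →
            HasDerivAt (fun s => z' s j) (z'' t j) t) →
          (∀ j, ∀ t : ℝ, a' < (t : EReal) → (t : EReal) < b' →
            z'' t j - ((∑ k, z t k) + z t j) * z' t j
              = z t j * (∑ k, (z t k) ^ 2) - (z t j) ^ 2 * (∑ k, z t k)) →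
          (∀ t : ℝ, a < (t : EReal) → (t : EReal) < b → z t = y t) →
          a' = a ∧ b' = b) →
        (y 0, y' 0) ∈ W →
        a = ⊥ ∧ b = ⊤ ∧
        ∃ δ > (0 : ℝ), ∃ T > (0 : ℝ),
          (∀ t : ℝ, T ≤ t → ∀ j, y t j < -δ) ∧
          (∀ t : ℝ, t ≤ -T → ∀ j, δ < y t j) := by
  have : Nonempty (Fin m) := ⟨⟨0, by lia⟩⟩
  obtain ⟨W₁, hW₁, forward⟩ := Hcu.exists_nhds_forward (ι := Fin m) ξ hζ
  obtain ⟨W₂, hW₂, backward⟩ := Hcu.exists_nhds_backward (ι := Fin m) ξ hζ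
  refine ⟨W₁ ∩ W₂, inter_mem hW₁ hW₂, fun a b y y' y'' ha hb hy hy' hcu hmax h₀ => ?_⟩
  have maximal : IsMaximalIntegralCurve (fun t => (y t, y' t)) Hcu.field a b := by
    refine ⟨Hcu.isIntegralCurveOn_field_iff.2 ⟨y'', hy, hy', hcu⟩, fun γ a' b' ha' hb' hγ eq => ?_⟩
    obtain ⟨z'', hz, hz', hz_hcu⟩ := Hcu.isIntegralCurveOn_field_iff.1 hγ
    exact hmax a' b' _ _ z'' ha' hb' hz hz' hz_hcu fun t hat htb =>
      congrArg Prod.fst (eq ⟨hat, htb⟩)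
  obtain ⟨K₁, hK₁, δ₁, hδ₁, T₁, hT₁, future⟩ := forward _ a b ha maximal.1 h₀.1
  obtain ⟨K₂, hK₂, δ₂, hδ₂, T₂, hT₂, past⟩ := backward _ a b hb maximal.1 h₀.2
  obtain rfl : b = ⊤ := maximal.eq_top_of_mem_isCompact Hcu.contDiff_field hK₁ ha hb
    fun t ht htb => (future t ht htb).1
  obtain rfl : a = ⊥ := maximal.eq_bot_of_mem_isCompact Hcu.contDiff_field hK₂ ha hb
    fun t ht hat => (past t ht hat).1
  refine ⟨rfl, rfl, min δ₁ δ₂, lt_min hδ₁ hδ₂, max T₁ T₂, lt_max_of_lt_left hT₁,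
    fun t ht j => ?_, fun t ht j => ?_⟩
  · have htT : T₁ ≤ t := (le_max_left _ _).trans ht
    exact ((future t (hT₁.le.trans htT) (EReal.coe_lt_top t)).2 htT j).trans_le
      (neg_le_neg (min_le_left _ _))
  · have htT : t ≤ -T₂ := ht.trans (neg_le_neg (le_max_right _ _))
    exact (min_le_right _ _).trans_lt
      ((past t (htT.trans (neg_nonpos.2 hT₂.le)) (EReal.bot_lt_coe t)).2 htT j)
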